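/- Let E be a real inner product space, let a > 0 be a real number, and let u₁, u₂, w₁, w₂ be unit vectors in E satisfying (u₁ + u₂) + a·(w₁ + w₂) = 0. Then cos(θ₁/2) = a·cos(θ₂/2), where θ₁ ∈ [0, π] is the angle between u₁ and u₂ and θ₂ ∈ [0, π] is the angle between w₁ and w₂. -/

import Mathlib

/-- The sum of two unit vectors at angle `θ` has norm `2 cos (θ / 2)`. -/
theorem norm_add_eq_two_mul_cos_half_angle
    {E : Type*} [NormedAddCommGroup E] [InnerProductSpace ℝ E]
    {x y : E} (hx : ‖x‖ = 1) (hy : ‖y‖ = 1) :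
    ‖x + y‖ = 2 * Real.cos (InnerProductGeometry.angle x y / 2) := by
  have h0 := InnerProductGeometry.angle_nonneg x y
  have hpi := InnerProductGeometry.angle_le_pi x y
  have hcos : 0 ≤ Real.cos (InnerProductGeometry.angle x y / 2) :=
    Real.cos_nonneg_of_mem_Icc ⟨by linarith, by linarith⟩
  rw [← sq_eq_sq₀ (norm_nonneg _) (by positivity), norm_add_sq_real, mul_pow, Real.cos_sq,
    mul_div_cancel₀ _ (two_ne_zero' ℝ), InnerProductGeometry.cos_angle, hx, hy]
  ring

/-- Balance equation of the stationary figure eight: if `u₁, u₂, w₁, w₂` are unit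
vectors with `(u₁ + u₂) + a • (w₁ + w₂) = 0` and `a > 0`, then
`cos(θ₁/2) = a cos(θ₂/2)` for the angles `θ₁` between `u₁, u₂` and `θ₂` between
`w₁, w₂`. -/
theorem figure_eight_balance
    {E : Type*} [NormedAddCommGroup E] [InnerProductSpace ℝ E]
    (a : ℝ) (ha : 0 < a)
    (u₁ u₂ w₁ w₂ : E) (hu₁ : ‖u₁‖ = 1) (hu₂ : ‖u₂‖ = 1)
    (hw₁ : ‖w₁‖ = 1) (hw₂ : ‖w₂‖ = 1)
    (hstat : (u₁ + u₂) + a • (w₁ + w₂) = 0) :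
    Real.cos (InnerProductGeometry.angle u₁ u₂ / 2)
      = a * Real.cos (InnerProductGeometry.angle w₁ w₂ / 2) := by
  have hnorm : ‖u₁ + u₂‖ = a * ‖w₁ + w₂‖ := by
    rw [eq_neg_of_add_eq_zero_left hstat, norm_neg, norm_smul, Real.norm_of_nonneg ha.le]
  rw [norm_add_eq_two_mul_cos_half_angle hu₁ hu₂,
    norm_add_eq_two_mul_cos_half_angle hw₁ hw₂] at hnorm
  linarith
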